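/- arXiv:2405.12771 — 5 statements merged into one kernel-verified Lean document; each statement's English description precedes it below -/
import Mathlib

section
/- Let k and l be fields. If Th_{∀₁∃}(k) ⊆ Th_{∀₁∃}(l), then Th_{∀₁∃}(k(t)) ⊆ Th_{∀₁∃}(l(t)); that is, if every ring sentence of the form ∀x ∃y₁…∃yₛ ψ (ψ quantifier-free) true in k is true in l, then every such sentence true in the rational function field k(t) is true in l(t). -/
open FirstOrder Language

attribute [local instance] FirstOrder.Ring.compatibleRingOfRing

/-- Apply existential quantifiers to the last `s` bound variables of a bounded formula. -/
def FirstOrder.Language.BoundedFormula.exsN {L : FirstOrder.Language} {α : Type*} {m : ℕ} :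
    ∀ {s : ℕ}, L.BoundedFormula α (m + s) → L.BoundedFormula α m
  | 0, φ => φ
  | _ + 1, φ => φ.ex.exsN

/-!
`Th_{∀₁∃}(k) ⊆ Th_{∀₁∃}(l)` gives `Th_∃(k) ⊆ Th_∃(l)`, hence a ring homomorphism from `k` to an
ultrapower `l*` of `l`, and it extends to `k(t) → l*(t) → l(t)*` with `t ↦ t`. Let
`∀ x ∃ y, ψ(x, y)` hold in `k(t)`.

* For `x = t`, as `l(t)` is elementary in `l(t)*`, some `y` in `l(t)` satisfies `ψ(t, y)`; the
  `l`-embeddings `l(t) → l(t)`, `t ↦ x`, then settle every nonconstant `x`.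
* If `k` is infinite, `k(t)` embeds over `k` in an ultrapower of `k`, by evaluation along a
  nonprincipal ultrafilter on `k`. So `∀ x ∃ y, ψ(x, y)` holds in `k`, hence in `l`, which settles
  the constants.
* If `k` has `q` elements, `l*` satisfies `x ^ q = x` because `k` and therefore `l` do. So
  `k → l*` is onto, and every constant of `l(t)` is, inside `l(t)*`, the image of a constant of
  `k(t)`.
-/

open Filter Polynomial

universe u v

section ForallExists

variable {L : FirstOrder.Language} {α M N : Type*} [L.Structure M] [L.Structure N] {m s : ℕ}

theorem isExistential_exsN : ∀ {s : ℕ} {φ : L.BoundedFormula α (m + s)},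
    φ.IsExistential → φ.exsN.IsExistential
  | 0, _, hφ => hφ
  | s + 1, _, hφ => isExistential_exsN (s := s) hφ.ex

theorem realize_exsN {v : α → M} {xs : Fin m → M} : ∀ {s : ℕ} {φ : L.BoundedFormula α (m + s)},
    φ.exsN.Realize v xs ↔ ∃ ys : Fin s → M, φ.Realize v (Fin.append xs ys)
  | 0, φ => by
    rw [Unique.exists_iff, Subsingleton.elim default Fin.elim0, Fin.append_elim0]
    rfl
  | s + 1, φ => by
    refine (realize_exsN (s := s) (φ := BoundedFormula.ex (n := m + s) φ)).trans ?_
    simp only [BoundedFormula.realize_ex, ← Fin.append_snoc]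
    exact ⟨fun ⟨ys, y, h⟩ => ⟨Fin.snoc ys y, h⟩,
      fun ⟨ys, h⟩ => ⟨Fin.init ys, ys (Fin.last s), by rwa [Fin.snoc_init_self]⟩⟩

theorem realize_alls_one {φ : L.BoundedFormula Empty 1} :
    M ⊨ (φ.alls : L.Sentence) ↔ ∀ x : M, φ.Realize default fun _ => x :=
  BoundedFormula.realize_alls.trans
    ((Equiv.funUnique (Fin 1) M).symm.forall_congr fun _ => Iff.rfl).symm

theorem realize_relabel_natAdd {χ : L.Formula (Fin s)} {xs : Fin m → M} {ys : Fin s → M} :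
    BoundedFormula.Realize (L := L) (α := Empty) (l := m + s)
      (BoundedFormula.relabel (k := 0) Sum.inr (χ.relabel (Fin.natAdd m)))
      default (Fin.append xs ys) ↔ χ.Realize ys := by
  refine (Formula.realize_relabel_sumInr _).trans (Formula.realize_relabel.trans ?_)
  simp only [Function.comp_def, Fin.append_right]

/-- `Th_{∀₁∃}(M) ⊆ Th_{∀₁∃}(N)`, the sentences being those of the form `∀ x ∃ y₁ … yₛ ψ` with `ψ`
quantifier-free. -/
def ForallExistsTheoryLE (L : FirstOrder.Language) (M N : Type*) [L.Structure M] [L.Structure N] :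
    Prop :=
  ∀ (s : ℕ) (ψ : L.BoundedFormula Empty (1 + s)), ψ.IsQF →
    M ⊨ (ψ.exsN.alls : L.Sentence) → N ⊨ (ψ.exsN.alls : L.Sentence)

/-- `Th_∃(M) ⊆ Th_∃(N)`, stated semantically: every quantifier-free formula which is satisfiable
in `M` is satisfiable in `N`. -/
def ExistsTheoryLE (L : FirstOrder.Language) (M N : Type*) [L.Structure M] [L.Structure N] : Prop :=
  ∀ (s : ℕ) (χ : L.Formula (Fin s)), χ.IsQF → (∃ v : Fin s → M, χ.Realize v) →
    ∃ v : Fin s → N, χ.Realize v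

theorem ForallExistsTheoryLE.existsTheoryLE [Nonempty N] (h : ForallExistsTheoryLE L M N) :
    ExistsTheoryLE L M N := by
  intro s χ hχ hM
  have hχ' := h s (BoundedFormula.relabel (k := 0) Sum.inr (χ.relabel (Fin.natAdd 1)))
    ((hχ.relabel _).relabel _)
  simp only [realize_alls_one, realize_exsN] at hχ'
  exact (hχ' (fun _ => hM.imp fun _ => realize_relabel_natAdd.2) (Classical.arbitrary N)).imp
    fun _ => realize_relabel_natAdd.1

end ForallExists

section Ultrapower

variable {L : FirstOrder.Language} {M N P : Type*} [L.Structure M] [L.Structure N] [L.Structure P]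

theorem isQF_restrictFreeVar {α β : Type*} [DecidableEq α] {n : ℕ} {φ : L.BoundedFormula α n}
    (hφ : φ.IsQF) (f : φ.freeVarFinset → β) : (φ.restrictFreeVar f).IsQF := by
  induction hφ with
  | falsum => exact .falsum
  | of_isAtomic hφ =>
    cases hφ with
    | equal t₁ t₂ => exact (BoundedFormula.IsAtomic.equal _ _).isQF
    | rel R ts => exact (BoundedFormula.IsAtomic.rel _ _).isQF
  | imp _ _ ih₁ ih₂ => exact (ih₁ _).imp (ih₂ _)

theorem ExistsTheoryLE.exists_realize [Nonempty N] (h : ExistsTheoryLE L M N) {α : Type*}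
    {χ : L.Formula α} (hχ : χ.IsQF) {v : α → M} (hv : χ.Realize v) : ∃ w : α → N, χ.Realize w := by
  classical
  let e := χ.freeVarFinset.equivFin
  obtain ⟨w, hw⟩ := h _ (χ.restrictFreeVar e) (isQF_restrictFreeVar hχ e)
    ⟨fun i => v (e.symm i), (BoundedFormula.realize_restrictFreeVar v (by simp)).2 hv⟩
  let w' : α → N := fun a =>
    if ha : a ∈ χ.freeVarFinset then w (e ⟨a, ha⟩) else Classical.arbitrary N
  exact ⟨w', (BoundedFormula.realize_restrictFreeVar w' (by simp [w'])).1 hw⟩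

theorem exists_embedding_of_realize_isQF (g : M → P)
    (hg : ∀ χ : L.Formula M, χ.IsQF → χ.Realize id → χ.Realize g) :
    ∃ f : M ↪[L] P, ⇑f = g := by
  have realize_iff {χ : L.Formula M} (hχ : χ.IsQF) : χ.Realize g ↔ χ.Realize id :=
    ⟨fun h => by_contra fun h' => hg _ hχ.not h' h, hg χ hχ⟩
  refine ⟨⟨⟨g, fun a b hab => ?_⟩, fun f xs => ?_, fun R xs => ?_⟩, rfl⟩
  · simpa using (realize_iff (χ := (Term.var a).equal (Term.var b))
      (BoundedFormula.IsAtomic.equal _ _).isQF).1 (by simpa using hab)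
  · simpa [Function.comp_def] using
      hg ((Term.var (Structure.funMap f xs)).equal (Term.func f fun i => Term.var (xs i)))
      (BoundedFormula.IsAtomic.equal _ _).isQF (by simp)
  · simpa [Function.comp_def] using realize_iff (χ := R.formula fun i => Term.var (xs i))
      (BoundedFormula.IsAtomic.rel _ _).isQF

theorem ExistsTheoryLE.exists_ultrafilter [Nonempty N] (h : ExistsTheoryLE L M N) :
    ∃ U : Ultrafilter (M → N), ∀ χ : L.Formula M, χ.IsQF → χ.Realize id →
      ∀ᶠ v in (U : Filter (M → N)), χ.Realize v := by
  let T := {χ : L.Formula M // χ.IsQF ∧ χ.Realize id}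
  let F : Filter (M → N) := ⨅ χ : T, 𝓟 {v | χ.1.Realize v}
  have : Nonempty T := ⟨⊤, .top, by simp⟩
  have hF : F.NeBot := by
    refine iInf_neBot_of_directed (fun χ₁ χ₂ => ?_) fun χ => ?_
    · refine ⟨⟨χ₁.1 ⊓ χ₂.1, χ₁.2.1.inf χ₂.2.1, by simp [χ₁.2.2, χ₂.2.2]⟩, ?_, ?_⟩ <;>
        simp +contextual
    · exact principal_neBot_iff.2 (h.exists_realize χ.2.1 χ.2.2)
  exact ⟨Ultrafilter.of F, fun χ hχ hM =>
    Ultrafilter.of_le F (mem_iInf_of_mem ⟨χ, hχ, hM⟩ (mem_principal_self _))⟩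

theorem ExistsTheoryLE.exists_embedding_ultrapower [Nonempty N] (h : ExistsTheoryLE L M N) :
    ∃ U : Ultrafilter (M → N),
      Nonempty (M ↪[L] (U : Filter (M → N)).Product fun _ => N) := by
  obtain ⟨U, hU⟩ := h.exists_ultrafilter
  obtain ⟨f, -⟩ := exists_embedding_of_realize_isQF
    (fun a => ((fun v => v a : (M → N) → N) : (U : Filter (M → N)).Product fun _ => N))
    fun χ hχ hM => (Ultraproduct.realize_formula_cast χ _).2 (hU χ hχ hM)
  exact ⟨U, ⟨f⟩⟩

end Ultrapower

section RingLanguage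

variable {R S : Type*}

/-- The ring homomorphism underlying a homomorphism of structures in the language of rings. -/
def ringHomOfLanguageHom [Ring R] [Ring S] (f : R →[Language.ring] S) : R →+* S :=
  RingHom.mk'
    { toFun := f
      map_one' := by simpa using! f.map_fun .one ![]
      map_mul' := fun a b => by simpa using! f.map_fun .mul ![a, b] }
    fun a b => by simpa using! f.map_fun .add ![a, b]

/-- An injective ring homomorphism, as an embedding of structures in the language of rings. -/
def languageEmbeddingOfRingHom [Ring R] [Ring S] (f : R →+* S) (hf : Function.Injective f) :
    R ↪[Language.ring] S where
  toFun := f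
  inj' := hf
  map_fun' g _ := by cases g <;> simp
  map_rel' r := by cases r

/-- The ultrapower of a ring in its two guises: the ring of germs and the ultraproduct of
`Language.ring`-structures. -/
def germEquivProduct {ι : Type*} (U : Ultrafilter ι) (R : Type*) [Ring R] :
    Germ (U : Filter ι) R ≃[Language.ring] (U : Filter ι).Product fun _ => R where
  toEquiv := Equiv.refl _
  map_fun' := by
    intro n g xs
    obtain ⟨ys, rfl⟩ : ∃ ys : Fin n → ι → R, (fun i => (ys i : Germ (U : Filter ι) R)) = xs :=
      ⟨fun i => (xs i).out, funext fun i => (xs i).out_eq'⟩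
    refine Eq.trans ?_ (Ultraproduct.funMap_cast g ys).symm
    cases g <;> rfl
  map_rel' r := by cases r

end RingLanguage

section Transfer

variable {ι R S : Type*} [Ring R] [Ring S] {U : Ultrafilter ι} {n : ℕ}
  {φ : Language.ring.BoundedFormula Empty n} {v : Empty → R} {w : Empty → S}

theorem realize_coe_germ_iff {v' : Empty → Germ (U : Filter ι) R} {xs : Fin n → R} :
    φ.Realize v' (fun i => (xs i : Germ (U : Filter ι) R)) ↔ φ.Realize v xs := by
  have hlos := Ultraproduct.boundedFormula_realize_cast (u := U) (M := fun _ => R) φ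
    (fun e _ => v e) fun i _ => xs i
  rw [eventually_const] at hlos
  rw [← hlos, ← StrongHomClass.realize_boundedFormula (germEquivProduct U R)]
  exact iff_of_eq (congrArg₂ φ.Realize (Subsingleton.elim _ _) rfl)

theorem realize_map_of_isExistential (hφ : φ.IsExistential) {f : R →+* S}
    (hf : Function.Injective f) {xs : Fin n → R} (h : φ.Realize v xs) :
    φ.Realize w (f ∘ xs) := by
  rw [Subsingleton.elim w (f ∘ v)]
  exact hφ.realize_embedding (languageEmbeddingOfRingHom f hf) h

theorem realize_of_map_eq_coe (hφ : φ.IsExistential) {f : R →+* Germ (U : Filter ι) S}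
    (hf : Function.Injective f) {xs : Fin n → R} {ys : Fin n → S}
    (hxy : ∀ i, f (xs i) = (ys i : Germ (U : Filter ι) S)) (h : φ.Realize v xs) :
    φ.Realize w ys := by
  rw [← realize_coe_germ_iff (U := U) (v' := f ∘ v), ← funext hxy]
  exact realize_map_of_isExistential hφ hf h

theorem ExistsTheoryLE.exists_ringHom_germ (h : ExistsTheoryLE Language.ring R S) :
    ∃ U : Ultrafilter (R → S), ∃ f : R →+* Germ (U : Filter (R → S)) S, Function.Injective f := by
  obtain ⟨U, ⟨f⟩⟩ := h.exists_embedding_ultrapower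
  let g := (germEquivProduct U S).symm.toEmbedding.comp f
  exact ⟨U, ringHomOfLanguageHom g.toHom, g.injective⟩

end Transfer

section RatFuncGerm

variable {ι : Type*} {U : Ultrafilter ι} {l : Filter ι}

/-- The map of rings of germs induced by a ring homomorphism. -/
def germMapRingHom {R S : Type*} [Semiring R] [Semiring S] (l : Filter ι) (f : R →+* S) :
    Germ l R →+* Germ l S where
  toFun := Germ.map f
  map_zero' := congrArg _ (funext fun _ => map_zero f)
  map_one' := congrArg _ (funext fun _ => map_one f)
  map_add' a b := Germ.inductionOn₂ a b fun _ _ => congrArg _ (funext fun _ => map_add f _ _)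
  map_mul' a b := Germ.inductionOn₂ a b fun _ _ => congrArg _ (funext fun _ => map_mul f _ _)

theorem germMapRingHom_injective {R S : Type*} [Ring R] [Ring S] {f : R →+* S}
    (hf : Function.Injective f) : Function.Injective (germMapRingHom l f) := by
  refine (injective_iff_map_eq_zero _).2 fun a => Germ.inductionOn a fun a ha => ?_
  exact Germ.coe_eq.2 ((Germ.coe_eq.1 ha).mono fun i hi => (map_eq_zero_iff f hf).1 hi)

/-- Polynomials over a ring of germs as germs of polynomials, the variable going to the constant
germ `X`. -/
noncomputable def germPolynomial (l : Filter ι) (R : Type*) [CommSemiring R] :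
    (Germ l R)[X] →+* Germ l R[X] :=
  eval₂RingHom (germMapRingHom l C) ((X : R[X]) : Germ l R[X])

theorem germPolynomial_X {R : Type*} [CommSemiring R] :
    germPolynomial l R X = ((X : R[X]) : Germ l R[X]) :=
  eval₂_X _ _

theorem germPolynomial_C {R : Type*} [CommSemiring R] (a : R) :
    germPolynomial l R (C (a : Germ l R)) = ((C a : R[X]) : Germ l R[X]) :=
  eval₂_C _ _

theorem exists_germPolynomial_eq {R : Type*} [CommSemiring R] (p : (Germ l R)[X]) :
    ∃ q : ι → R[X], germPolynomial l R p = (q : Germ l R[X]) ∧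
      ∀ n, p.coeff n = ((fun i => (q i).coeff n : ι → R) : Germ l R) := by
  induction p using Polynomial.induction_on' with
  | add p₁ p₂ ih₁ ih₂ =>
    obtain ⟨q₁, hq₁, hc₁⟩ := ih₁
    obtain ⟨q₂, hq₂, hc₂⟩ := ih₂
    refine ⟨q₁ + q₂, by rw [map_add, hq₁, hq₂, Germ.coe_add], fun n => ?_⟩
    rw [coeff_add, hc₁, hc₂, ← Germ.coe_add]
    exact congrArg _ (funext fun i => (coeff_add (q₁ i) (q₂ i) n).symm)
  | monomial m a =>
    induction a using Germ.inductionOn with | h a =>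
    refine ⟨fun i => monomial m (a i), ?_, fun n => ?_⟩
    · rw [germPolynomial, coe_eval₂RingHom, eval₂_monomial]
      exact Germ.coe_eq.2 (.of_forall fun i => C_mul_X_pow_eq_monomial)
    · simp only [coeff_monomial]
      split_ifs <;> rfl

theorem germPolynomial_injective (l : Filter ι) (R : Type*) [CommRing R] :
    Function.Injective (germPolynomial l R) := by
  refine (injective_iff_map_eq_zero _).2 fun p hp => Polynomial.ext fun n => ?_
  obtain ⟨q, hq, hc⟩ := exists_germPolynomial_eq p
  rw [hc, coeff_zero]
  refine Germ.coe_eq.2 ((Germ.coe_eq.1 (hq.symm.trans hp)).mono fun i hi => ?_)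
  simp [hi]

theorem exists_ringHom_ratFunc_germ {K L : Type*} [Field K] [Field L]
    (f : K →+* Germ (U : Filter ι) L) :
    ∃ F : RatFunc K →+* Germ (U : Filter ι) (RatFunc L),
      F RatFunc.X = (RatFunc.X : RatFunc L) ∧
      ∀ a b, f a = (b : L) → F (RatFunc.C a) = (RatFunc.C b : RatFunc L) := by
  let φ : K[X] →+* Germ (U : Filter ι) (RatFunc L) :=
    (germMapRingHom (U : Filter ι) (algebraMap L[X] (RatFunc L))).comp
      ((germPolynomial (U : Filter ι) L).comp (mapRingHom f))
  have hφ : Function.Injective φ :=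
    (germMapRingHom_injective (RatFunc.algebraMap_injective L)).comp
      ((germPolynomial_injective _ L).comp (map_injective f f.injective))
  refine ⟨IsFractionRing.lift hφ, ?_, fun a b hab => ?_⟩
  · rw [← RatFunc.algebraMap_X, IsFractionRing.lift_algebraMap]
    simp only [φ, RingHom.comp_apply, coe_mapRingHom, map_X, germPolynomial_X]
    exact congrArg _ (funext fun _ => RatFunc.algebraMap_X)
  · rw [← RatFunc.algebraMap_C, IsFractionRing.lift_algebraMap]
    simp only [φ, RingHom.comp_apply, coe_mapRingHom, Polynomial.map_C, hab, germPolynomial_C]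
    exact congrArg _ (funext fun _ => RatFunc.algebraMap_C b)

theorem exists_ringHom_ratFunc_germ_self (K : Type*) [Field K] [Infinite K] :
    ∃ F : RatFunc K →+* Germ (hyperfilter K : Filter K) K, ∀ a, F (RatFunc.C a) = (a : K) := by
  let φ : K[X] →+* Germ (hyperfilter K : Filter K) K :=
    (Germ.coeRingHom _).comp (RingHom.pi evalRingHom)
  have hφ : Function.Injective φ := (injective_iff_map_eq_zero _).2 fun p hp => by
    have hroots : {a | p.IsRoot a} ∈ hyperfilter K := Germ.coe_eq.1 hp
    exact p.eq_zero_of_infinite_isRoot fun hfin => hfin.notMem_hyperfilter hroots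
  refine ⟨IsFractionRing.lift hφ, fun a => ?_⟩
  rw [← RatFunc.algebraMap_C, IsFractionRing.lift_algebraMap]
  exact Germ.coe_eq.2 (.of_forall fun _ => eval_C)

theorem exists_ringHom_ratFunc_X_eq {K : Type*} [Field K] {x : RatFunc K}
    (hx : ¬∃ c, x = RatFunc.C c) : ∃ F : RatFunc K →+* RatFunc K, F RatFunc.X = x := by
  have hinj : Function.Injective (aeval x : K[X] →ₐ[K] RatFunc K) :=
    transcendental_iff_injective.1 (RatFunc.transcendental_of_ne_C x hx)
  refine ⟨IsFractionRing.lift (g := (aeval x : K[X] →ₐ[K] RatFunc K).toRingHom) hinj, ?_⟩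
  rw [← RatFunc.algebraMap_X, IsFractionRing.lift_algebraMap]
  exact aeval_X x

end RatFuncGerm

section RatFunc

variable {K : Type*} [Field K] {n : ℕ} {φ : Language.ring.BoundedFormula Empty n}
  {v : Empty → K} {w : Empty → RatFunc K}

theorem realize_of_realize_ratFunc_C [Infinite K] (hφ : φ.IsExistential) {xs : Fin n → K}
    (h : φ.Realize w (RatFunc.C ∘ xs)) : φ.Realize v xs := by
  obtain ⟨F, hF⟩ := exists_ringHom_ratFunc_germ_self K
  exact realize_of_map_eq_coe hφ F.injective (fun i => hF (xs i)) h

theorem realize_of_realize_ratFunc_X (hφ : φ.IsExistential)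
    (h : φ.Realize w fun _ => RatFunc.X) {x : RatFunc K}
    (hx : ¬∃ c, x = RatFunc.C c) : φ.Realize w fun _ => x := by
  obtain ⟨F, rfl⟩ := exists_ringHom_ratFunc_X_eq hx
  exact realize_map_of_isExistential hφ F.injective h

end RatFunc

section FiniteField

theorem ForallExistsTheoryLE.pow_eq_self {R S : Type*} [CommRing R] [CommRing S]
    (h : ForallExistsTheoryLE Language.ring R S) {q : ℕ} (hR : ∀ a : R, a ^ q = a) (b : S) :
    b ^ q = b := by
  let x : FreeCommRing (Empty ⊕ Fin (1 + 0)) := .of (.inr 0)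
  have hS := h 0 ((Ring.termOfFreeCommRing (x ^ q)).bdEqual (Ring.termOfFreeCommRing x))
    (BoundedFormula.IsAtomic.equal _ _).isQF
  simp only [realize_alls_one, realize_exsN, BoundedFormula.realize_bdEqual,
    Ring.realize_termOfFreeCommRing, map_pow, x, FreeCommRing.lift_of] at hS
  obtain ⟨_, hb⟩ := hS (fun a => ⟨Fin.elim0, hR a⟩) b
  exact hb

theorem surjective_of_forall_pow_card_eq_self {K L : Type*} [Field K] [Fintype K] [Field L]
    (f : K →+* L) (hL : ∀ x : L, x ^ Fintype.card K = x) : Function.Surjective f := fun x => by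
  have hsplits := IsSplittingField.splits K (X ^ Fintype.card K - X : K[X])
  rw [Algebra.algebraMap_self, Polynomial.map_id] at hsplits
  exact hsplits.mem_range_of_isRoot (FiniteField.X_pow_card_sub_X_ne_zero K Fintype.one_lt_card)
    (by simp [hL])

theorem ForallExistsTheoryLE.surjective_of_finite {K L ι : Type*} [Field K] [Finite K] [Field L]
    (h : ForallExistsTheoryLE Language.ring K L) {U : Ultrafilter ι}
    (f : K →+* Germ (U : Filter ι) L) : Function.Surjective f := by
  have := Fintype.ofFinite K
  refine surjective_of_forall_pow_card_eq_self f fun x => Germ.inductionOn x fun g => ?_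
  exact congrArg _ (funext fun i => h.pow_eq_self FiniteField.pow_card (g i))

end FiniteField

theorem stmt11_general (k : Type u) (l : Type v) [Field k] [Field l]
    (h : ForallExistsTheoryLE Language.ring k l) :
    ForallExistsTheoryLE Language.ring (RatFunc k) (RatFunc l) := by
  intro s ψ hψ hk
  have hex : ψ.exsN.IsExistential := isExistential_exsN hψ.isExistential
  obtain ⟨U, f, -⟩ := h.existsTheoryLE.exists_ringHom_germ
  obtain ⟨F, hFX, hFC⟩ := exists_ringHom_ratFunc_germ f
  rw [realize_alls_one] at hk ⊢
  have transfer {x : RatFunc k} {y : RatFunc l} (hxy : F x = y) {w : Empty → RatFunc l} :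
      ψ.exsN.Realize w fun _ => y :=
    realize_of_map_eq_coe hex F.injective (fun _ => hxy) (hk x)
  intro x
  by_cases hx : ∃ b, x = RatFunc.C b
  · obtain ⟨b, rfl⟩ := hx
    cases finite_or_infinite k with
    | inl _ =>
      obtain ⟨a, ha⟩ := h.surjective_of_finite f b
      exact transfer (hFC a b ha)
    | inr _ =>
      have hl := h s ψ hψ (realize_alls_one.2 fun a => realize_of_realize_ratFunc_C hex (hk _))
      exact realize_map_of_isExistential hex RatFunc.C_injective (realize_alls_one.1 hl b)
  · exact realize_of_realize_ratFunc_X hex (transfer hFX) hx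

/-- if `Th_{∀₁∃}(k) ⊆ Th_{∀₁∃}(l)`, then `Th_{∀₁∃}(k(t)) ⊆ Th_{∀₁∃}(l(t))`:
if every ring sentence of the form `∀ x ∃ y₁ … yₛ ψ` (`ψ` quantifier-free) true in `k` is true
in `l`, then every such sentence true in the rational function field `k(t)` is true in `l(t)`. -/
theorem stmt11 (k l : Type) [Field k] [Field l]
    (h : ∀ (s : ℕ) (ψ : Language.ring.BoundedFormula Empty (1 + s)), ψ.IsQF →
      k ⊨ (ψ.exsN.alls : Language.ring.Sentence) → l ⊨ (ψ.exsN.alls : Language.ring.Sentence)) :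
    ∀ (s : ℕ) (ψ : Language.ring.BoundedFormula Empty (1 + s)), ψ.IsQF →
      RatFunc k ⊨ (ψ.exsN.alls : Language.ring.Sentence) →
      RatFunc l ⊨ (ψ.exsN.alls : Language.ring.Sentence) :=
  stmt11_general k l h
end

section
/- Let k be an infinite field, let ψ(x, u₁,…,uₙ) be an existential ring formula, and let a₁,…,aₙ ∈ k. Then the rational function field k(t) satisfies ∀x ψ(x, a₁,…,aₙ) if and only if both of the following hold: (i) k(t) ⊨ ψ(t, a₁,…,aₙ), and (ii) k ⊨ ∀x ψ(x, a₁,…,aₙ). -/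
open FirstOrder Language

attribute [local instance] FirstOrder.Ring.compatibleRingOfRing

/-!
Existential formulas are preserved by embeddings, and every element transcendental over `k`
generates a copy of `k(t)` over `k`. Applied to a nonconstant element of `k(t)` this transfers
`ψ(t, a⃗)` to all nonconstant `x`. Applied to the germ of the identity in the ultrapower of `k`
along a nonprincipal ultrafilter, it embeds `k(t)` over `k` into an elementary extension of `k`, so
that existential formulas with parameters in `k` descend from `k(t)` to `k`.
-/

open Filter Polynomial

section ExistentialFormulas

theorem isExistential_exs {L : Language} {α : Type*} :
    ∀ {n : ℕ} {φ : L.BoundedFormula α n}, φ.IsExistential → φ.exs.IsExistential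
  | 0, _, hφ => hφ
  | _ + 1, φ, hφ => isExistential_exs (φ := φ.ex) (.ex hφ)

variable {R S : Type*} [NonAssocRing R] [NonAssocRing S] [Ring.CompatibleRing R]
  [Ring.CompatibleRing S]

/-- An injective ring homomorphism, viewed as an embedding of structures in the language of rings,
so that preservation theorems of model theory apply to it. -/
def ringLanguageEmbedding (f : R →+* S) (hf : Function.Injective f) : R ↪[Language.ring] S where
  toFun := f
  inj' := hf
  map_fun' g _ := by cases g <;> simp
  map_rel' r := r.elim

theorem realize_ringHom_comp_of_isExistential {α : Type*} {φ : Language.ring.Formula α}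
    (hφ : φ.IsExistential) {f : R →+* S} (hf : Function.Injective f) {v : α → R}
    (h : φ.Realize v) : φ.Realize (f ∘ v) := by
  have hφf := hφ.realize_embedding (ringLanguageEmbedding f hf) h
  rwa [Subsingleton.elim (_ ∘ default) default] at hφf

end ExistentialFormulas

section TranscendentalElements

variable {k K : Type*} [Field k] [Field K] [Algebra k K]

/-- The embedding `k(t) → K` over `k` that sends `t` to a given transcendental element. -/
noncomputable def ratFuncEmbedding {x : K} (hx : Transcendental k x) : RatFunc k →ₐ[k] K :=
  (IntermediateField.adjoin k {x}).val.comp (RatFunc.algEquivOfTranscendental x hx)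

theorem ratFuncEmbedding_X {x : K} (hx : Transcendental k x) :
    ratFuncEmbedding hx RatFunc.X = x :=
  RatFunc.algEquivOfTranscendental_X x hx

theorem realize_of_transcendental_of_realize_X [Ring.CompatibleRing K] {α β : Type*}
    {φ : Language.ring.Formula (β ⊕ α)} (hφ : φ.IsExistential) {a : α → k}
    (h : φ.Realize (Sum.elim (fun _ => RatFunc.X) (algebraMap k (RatFunc k) ∘ a)))
    {x : K} (hx : Transcendental k x) :
    φ.Realize (Sum.elim (fun _ => x) (algebraMap k K ∘ a)) := by
  let f : RatFunc k →ₐ[k] K := ratFuncEmbedding hx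
  have hf : f ∘ Sum.elim (fun _ : β => RatFunc.X) (algebraMap k (RatFunc k) ∘ a) =
      Sum.elim (fun _ => x) (algebraMap k K ∘ a) := by
    rw [Sum.comp_elim]
    exact congrArg₂ Sum.elim (funext fun _ => ratFuncEmbedding_X hx)
      (funext fun i => f.commutes (a i))
  rw [← hf]
  exact realize_ringHom_comp_of_isExistential hφ (f := f.toRingHom) f.injective h

end TranscendentalElements

section Ultrapowers

variable {ι : Type*}

/-- The algebra structure on germs whose structure map sends a scalar to the germ of a constant
function. For an ultrafilter it makes an ultrapower an extension of its base. -/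
instance germAlgebra {R A : Type*} [CommSemiring R] [Semiring A] [Algebra R A] (l : Filter ι) :
    Algebra R (l.Germ A) where
  algebraMap := (Germ.coeRingHom l).comp (algebraMap R (ι → A))
  commutes' r x := by
    induction x using Germ.inductionOn with
    | _ f => exact congrArg Germ.ofFun (Algebra.commutes r f)
  smul_def' r x := by
    induction x using Germ.inductionOn with
    | _ f => exact congrArg Germ.ofFun (Algebra.smul_def r f)

theorem aeval_germ_coe {R A : Type*} [CommSemiring R] [Semiring A] [Algebra R A] (l : Filter ι)
    (f : ι → A) (p : R[X]) :
    aeval (f : l.Germ A) p = ((fun i => aeval (f i) p : ι → A) : l.Germ A) := by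
  let coeAlgHom : (ι → A) →ₐ[R] l.Germ A := { Germ.coeRingHom l with commutes' := fun _ => rfl }
  calc aeval (f : l.Germ A) p = coeAlgHom (aeval f p) := aeval_algHom_apply coeAlgHom f p
    _ = ((fun i => aeval (f i) p : ι → A) : l.Germ A) := congrArg Germ.ofFun (aeval_pi_apply f p)

theorem transcendental_germ_id {R : Type*} [CommRing R] [IsDomain R] {l : Filter R} [l.NeBot]
    (hl : l ≤ cofinite) : Transcendental R ((id : R → R) : l.Germ R) := by
  refine transcendental_iff.2 fun p hp => ?_
  have hroots : ∀ᶠ c in l, p.IsRoot c := by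
    rw [aeval_germ_coe] at hp
    exact Germ.coe_eq.1 hp
  by_contra hp0
  have hnonroots : ∀ᶠ c in l, ¬ p.IsRoot c :=
    hl (finite_setOfPred_isRoot hp0).compl_mem_cofinite
  exact (hroots.and hnonroots).exists.elim fun _ hc => hc.2 hc.1

/-- The ultrapower structure on germs along an ultrafilter. Łoś's theorem is stated for
this structure, so it must take precedence over `FirstOrder.Ring.compatibleRingOfRing`. -/
instance germCompatibleRing {R : Type*} [NonAssocRing R] [Ring.CompatibleRing R]
    (u : Ultrafilter ι) : Ring.CompatibleRing ((u : Filter ι).Germ R) where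
  toStructure := inferInstanceAs (Language.ring.Structure ((u : Filter ι).Product fun _ => R))
  funMap_add x := Quotient.induction_on_pi x fun f => (Ultraproduct.funMap_cast _ f).trans <|
    congrArg Germ.ofFun <| funext fun _ => Ring.CompatibleRing.funMap_add _
  funMap_mul x := Quotient.induction_on_pi x fun f => (Ultraproduct.funMap_cast _ f).trans <|
    congrArg Germ.ofFun <| funext fun _ => Ring.CompatibleRing.funMap_mul _
  funMap_neg x := Quotient.induction_on_pi x fun f => (Ultraproduct.funMap_cast _ f).trans <|
    congrArg Germ.ofFun <| funext fun _ => Ring.CompatibleRing.funMap_neg _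
  funMap_zero x := Quotient.induction_on_pi x fun f => (Ultraproduct.funMap_cast _ f).trans <|
    congrArg Germ.ofFun <| funext fun _ => Ring.CompatibleRing.funMap_zero _
  funMap_one x := Quotient.induction_on_pi x fun f => (Ultraproduct.funMap_cast _ f).trans <|
    congrArg Germ.ofFun <| funext fun _ => Ring.CompatibleRing.funMap_one _

theorem realize_germ_const_iff {R : Type*} [NonAssocRing R] [Ring.CompatibleRing R]
    (u : Ultrafilter ι) {α : Type*} {φ : Language.ring.Formula α} {v : α → R} :
    φ.Realize (fun i => (v i : (u : Filter ι).Germ R)) ↔ φ.Realize v :=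
  (Ultraproduct.realize_formula_cast (u := u) φ fun i _ => v i).trans eventually_const

end Ultrapowers

theorem realize_algebraMap_ratFunc_iff {k : Type*} [Field k] [Infinite k] {α : Type*}
    {φ : Language.ring.Formula α} (hφ : φ.IsExistential) {v : α → k} :
    φ.Realize (algebraMap k (RatFunc k) ∘ v) ↔ φ.Realize v := by
  refine ⟨fun h => ?_,
    realize_ringHom_comp_of_isExistential hφ (algebraMap k (RatFunc k)).injective⟩
  let f : RatFunc k →ₐ[k] (hyperfilter k : Filter k).Germ k :=
    ratFuncEmbedding (transcendental_germ_id hyperfilter_le_cofinite)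
  have hf : f ∘ algebraMap k (RatFunc k) ∘ v =
      fun i => (v i : (hyperfilter k : Filter k).Germ k) :=
    funext fun i => f.commutes (v i)
  rw [← realize_germ_const_iff (hyperfilter k), ← hf]
  exact realize_ringHom_comp_of_isExistential hφ (f := f.toRingHom) f.injective h

/-- let `k` be an infinite field, `ψ(x, u₁, …, uₙ)` an existential ring formula
(given as `ψ₀.exs` with `ψ₀` quantifier-free) and `a₁, …, aₙ ∈ k`.  Then
`k(t) ⊨ ∀ x ψ(x, a⃗)` iff `k(t) ⊨ ψ(t, a⃗)` and `k ⊨ ∀ x ψ(x, a⃗)`. -/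
theorem stmt13 (k : Type*) [Field k] [Infinite k]
    (n s : ℕ) (ψ : Language.ring.BoundedFormula (Unit ⊕ Fin n) s) (hψ : ψ.IsQF)
    (a : Fin n → k) :
    (∀ x : RatFunc k, (ψ.exs : Language.ring.Formula _).Realize
        (Sum.elim (fun _ : Unit => x) (fun i => algebraMap k (RatFunc k) (a i)))) ↔
      ((ψ.exs : Language.ring.Formula _).Realize
          (Sum.elim (fun _ : Unit => (RatFunc.X : RatFunc k))
            (fun i => algebraMap k (RatFunc k) (a i))) ∧
        ∀ x : k, (ψ.exs : Language.ring.Formula _).Realize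
          (Sum.elim (fun _ : Unit => x) a)) := by
  have hexs := isExistential_exs hψ.isExistential
  have hconst (c : k) :
      (ψ.exs : Language.ring.Formula _).Realize (Sum.elim
        (fun _ : Unit => algebraMap k (RatFunc k) c) (algebraMap k (RatFunc k) ∘ a)) ↔
      (ψ.exs : Language.ring.Formula _).Realize (Sum.elim (fun _ : Unit => c) a) := by
    rw [← realize_algebraMap_ratFunc_iff (k := k) hexs, Sum.comp_elim]
    rfl
  refine ⟨fun h => ⟨h RatFunc.X, fun c => (hconst c).1 (h _)⟩, fun ⟨hX, hk⟩ x => ?_⟩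
  by_cases hx : ∃ c, x = RatFunc.C c
  · obtain ⟨c, rfl⟩ := hx
    exact (hconst c).2 (hk c)
  · exact realize_of_transcendental_of_realize_X hexs hX (x.transcendental_of_ne_C hx)
end

section
/- Let k be a field, K = k((t)) the field of formal Laurent series over k, and t ∈ K the Laurent series with single coefficient 1 in degree 1. For z ∈ K, there exists a k-algebra homomorphism σ : K → K with σ(t) = z if and only if z ≠ 0 and v_t(z) > 0. In other words, {σ(t) : σ a k-algebra endomorphism of K} = 𝔪 \ {0}, where 𝔪 is the maximal ideal of the valuation ring k[[t]]. -/
/-!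
Over any commutative ring, `1 + n²f` with `f(0) = 0` has an `n`-th root among power series. Let
`σ(t) = z` over a field. For a constant `a` and `n` invertible, `1 + at = 1 + n²(a / n²)t`, so
`1 + az = σ(1 + at)` is an `n`-th power for arbitrarily large `n`; its order is divisible by all of
these `n` and hence vanishes. Taking `a = 1` shows that `z` has no pole, and taking `a = -1 / z₀`
that its constant coefficient `z₀` is zero. Over a reduced ring one reduces modulo a prime, where
the leading coefficient of the unit `z` is a unit and therefore survives reduction modulo a further
maximal ideal, which leads back to a field. Conversely, power series can be evaluated at any `z` of
positive order, and this extends to `R((t)) = R⟦t⟧[t⁻¹]` as soon as `z` is invertible.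
-/

open scoped PowerSeries LaurentSeries HahnSeries

section PowerSeriesRoots

open PowerSeries

variable {R : Type*} [CommRing R]

-- `(1 + nX)ⁿ = 1 + n²P` with `P = X + kX²`; substituting the compositional inverse of `P`
-- gives an `n`-th root of `1 + n²X`.
lemma exists_pow_eq_one_add_sq_mul (n : ℕ) {f : R⟦X⟧} (hf : constantCoeff f = 0) :
    ∃ g : R⟦X⟧, g ^ n = 1 + (n : R⟦X⟧) ^ 2 * f := by
  obtain ⟨k, hk⟩ := Polynomial.powAddExpansion (1 : R⟦X⟧) ((n : R⟦X⟧) * X) n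
  set P : R⟦X⟧ := X + k * X ^ 2 with hP
  have expansion : (1 + (n : R⟦X⟧) * X) ^ n = 1 + (n : R⟦X⟧) ^ 2 * P := by
    rw [hk, hP]
    ring
  have hP₀ : constantCoeff P = 0 := by simp [hP]
  have hP₁ : IsUnit (coeff 1 P) := by simp [hP, coeff_mul_X_pow']
  let invP := substAlgHom (R := R) (HasSubst.substInvOfIsUnit P hP₁)
  let evalf := substAlgHom (R := R) (HasSubst.of_constantCoeff_zero' hf)
  have invP_P : invP P = X := by
    rw [coe_substAlgHom, subst_substInvOfIsUnit_right P hP₀ hP₁]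
  have evalf_X : evalf X = f := substAlgHom_X _
  refine ⟨evalf (invP (1 + (n : R⟦X⟧) * X)), ?_⟩
  rw [← map_pow, ← map_pow, expansion]
  simp only [map_add, map_mul, map_pow, map_one, map_natCast, invP_P, evalf_X]

end PowerSeriesRoots

section OrderTop

open HahnSeries

lemma orderTop_pos_iff_forall_coeff_eq_zero {Γ A : Type*} [LinearOrder Γ] [Zero Γ] [Zero A]
    {z : A⟦Γ⟧} : 0 < z.orderTop ↔ ∀ i ≤ 0, z.coeff i = 0 := by
  refine ⟨fun hpos i hi => coeff_eq_zero_of_lt_orderTop (hpos.trans_le' (mod_cast hi)),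
    fun hcoeff => ?_⟩
  by_contra! hle
  obtain ⟨i, hi⟩ := WithTop.ne_top_iff_exists.mp (hle.trans_lt (WithTop.coe_lt_top 0)).ne
  rw [← hi] at hle
  exact coeff_orderTop_ne hi.symm (hcoeff i (mod_cast hle))

lemma orderTop_eq_zero_of_forall_exists_pow_eq {A : Type*} [Semiring A] [NoZeroDivisors A]
    {y : A⸨X⸩} (hy : y ≠ 0) (hroot : ∀ N : ℕ, ∃ n > N, ∃ g : A⸨X⸩, g ^ n = y) :
    y.orderTop = 0 := by
  obtain ⟨n, hn, g, rfl⟩ := hroot y.order.natAbs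
  have hdvd : (n : ℤ) ∣ (g ^ n).order := by
    rw [order_pow, nsmul_eq_mul]
    exact dvd_mul_right _ _
  have horder : (g ^ n).order = 0 :=
    Int.eq_zero_of_dvd_of_natAbs_lt_natAbs hdvd (by simpa only [Int.natAbs_natCast] using hn)
  rw [← order_eq_orderTop_of_ne_zero hy, horder, WithTop.coe_zero]

lemma orderTop_pos_of_forall_orderTop_one_add_C_mul_eq_zero {Γ A : Type*} [AddCommMonoid Γ]
    [LinearOrder Γ] [IsOrderedCancelAddMonoid Γ] [DivisionRing A] {z : A⟦Γ⟧}
    (h : ∀ a : A, (1 + C a * z).orderTop = 0) : 0 < z.orderTop := by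
  have hnonneg : 0 ≤ z.orderTop := calc
    0 = min (1 + z).orderTop (1 : A⟦Γ⟧).orderTop := by
      have h₁ : (1 + z).orderTop = 0 := by simpa only [map_one, one_mul] using h 1
      rw [h₁, orderTop_one, min_self]
    _ ≤ (1 + z - 1).orderTop := min_orderTop_le_orderTop_sub
    _ = z.orderTop := by rw [add_sub_cancel_left]
  refine hnonneg.lt_of_ne fun hzero => ?_
  have hcoeff : z.coeff 0 ≠ 0 := coeff_orderTop_ne hzero.symm
  refine coeff_orderTop_ne (h (-(z.coeff 0)⁻¹)) ?_
  simp [hcoeff]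

end OrderTop

section MapCoefficients

variable {Γ A B : Type*} [AddCommMonoid Γ] [PartialOrder Γ] [IsOrderedCancelAddMonoid Γ]

lemma hahnSeries_map_mul [NonUnitalNonAssocSemiring A] [NonUnitalNonAssocSemiring B]
    (f : A →ₙ+* B) (x y : A⟦Γ⟧) : (x * y).map f = x.map f * y.map f := by
  have hx : (x.map f).support ⊆ x.support := x.support_map_subset (f : ZeroHom A B)
  have hy : (y.map f).support ⊆ y.support := y.support_map_subset (f : ZeroHom A B)
  ext a
  rw [HahnSeries.coeff_mul_left' x.isPWO_support hx]
  simp only [HahnSeries.map_coeff, HahnSeries.coeff_mul, map_sum, map_mul]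
  symm
  refine Finset.sum_subset (fun ij hij => ?_) fun ij hij hnot => ?_
  · rw [Finset.mem_antidiagonal] at hij ⊢
    exact ⟨hij.1, hy hij.2.1, hij.2.2⟩
  · rw [Finset.mem_antidiagonal] at hij hnot
    have hzero : f (y.coeff ij.2) = 0 := by
      by_contra hne
      exact hnot ⟨hij.1, hne, hij.2.2⟩
    rw [hzero, mul_zero]

variable [NonAssocSemiring A] [NonAssocSemiring B]

/-- The ring homomorphism of Hahn series that applies a ring homomorphism `f` to every
coefficient, used to reduce Laurent series modulo an ideal of the coefficient ring. -/
def hahnSeriesMapRingHom (f : A →+* B) : A⟦Γ⟧ →+* B⟦Γ⟧ where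
  toFun x := x.map f
  map_one' := (HahnSeries.map_single (f : ZeroHom A B)).trans (congrArg _ (map_one f))
  map_zero' := HahnSeries.map_zero (f : ZeroHom A B)
  map_add' _ _ := HahnSeries.map_add (f : A →+ B)
  map_mul' := hahnSeries_map_mul (f : A →ₙ+* B)

end MapCoefficients

section PositiveOrder

open HahnSeries

lemma exists_nat_gt_cast_ne_zero (A : Type*) [AddMonoidWithOne A] [NeZero (1 : A)] (N : ℕ) :
    ∃ n > N, (n : A) ≠ 0 := by
  by_cases h : ((N + 1 : ℕ) : A) = 0
  · refine ⟨N + 2, by omega, ?_⟩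
    rw [Nat.cast_succ, h, zero_add]
    exact one_ne_zero
  · exact ⟨N + 1, N.lt_succ_self, h⟩

section Field

variable {R K : Type*} [CommRing R] [Field K] {φ : R⟦X⟧ →+* K⸨X⸩} {f : R →+* K}

lemma orderTop_one_add_C_mul_map_X (hf : Function.Surjective f)
    (hφ : ∀ r, φ (PowerSeries.C r) = C (f r)) (a : K) :
    (1 + C a * φ PowerSeries.X).orderTop = 0 := by
  obtain ⟨r, rfl⟩ := hf a
  have himage : φ (1 + PowerSeries.C r * PowerSeries.X) = 1 + C (f r) * φ PowerSeries.X := by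
    rw [map_add, map_one, map_mul, hφ]
  have hunit : IsUnit (1 + PowerSeries.C r * PowerSeries.X : R⟦X⟧) := by
    simp [PowerSeries.isUnit_iff_constantCoeff]
  refine orderTop_eq_zero_of_forall_exists_pow_eq (himage ▸ (hunit.map φ).ne_zero) fun N => ?_
  obtain ⟨n, hnN, hn⟩ := exists_nat_gt_cast_ne_zero K N
  obtain ⟨s, hs⟩ := hf (f r / n ^ 2)
  obtain ⟨g, hg⟩ := exists_pow_eq_one_add_sq_mul n
    (f := PowerSeries.C s * PowerSeries.X) (by simp)
  have hscale : (n : K⸨X⸩) ^ 2 * C (f s) = C (f r) := by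
    rw [hs, ← map_natCast (C : K →+* K⸨X⸩), ← map_pow, ← map_mul,
      mul_div_cancel₀ _ (pow_ne_zero 2 hn)]
  refine ⟨n, hnN, φ g, ?_⟩
  rw [← map_pow, hg, map_add, map_one, map_mul, map_pow, map_natCast, map_mul, hφ, ← mul_assoc,
    hscale]

lemma orderTop_map_X_pos_of_field (hf : Function.Surjective f)
    (hφ : ∀ r, φ (PowerSeries.C r) = C (f r)) : 0 < (φ PowerSeries.X).orderTop :=
  orderTop_pos_of_forall_orderTop_one_add_C_mul_eq_zero (orderTop_one_add_C_mul_map_X hf hφ)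

end Field

variable {R A : Type*} [CommRing R] [CommRing A] {φ : R⟦X⟧ →+* A⸨X⸩} {f : R →+* A}

lemma hahnSeriesMapRingHom_comp_C {B : Type*} [CommRing B] (g : A →+* B)
    (hφ : ∀ r, φ (PowerSeries.C r) = C (f r)) (r : R) :
    ((hahnSeriesMapRingHom g).comp φ) (PowerSeries.C r) = C ((g.comp f) r) := by
  rw [RingHom.comp_apply, hφ]
  exact map_C (f r) g

lemma orderTop_map_X_pos_of_isDomain [IsDomain A] (hf : Function.Surjective f)
    (hφ : ∀ r, φ (PowerSeries.C r) = C (f r)) (hX : IsUnit (φ PowerSeries.X)) :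
    0 < (φ PowerSeries.X).orderTop := by
  obtain ⟨m, hm⟩ := Ideal.exists_maximal A
  let := Ideal.Quotient.field m
  set z := φ PowerSeries.X
  let π := Ideal.Quotient.mk m
  have hpos : 0 < (z.map π).orderTop :=
    orderTop_map_X_pos_of_field (Ideal.Quotient.mk_surjective.comp hf)
      (hahnSeriesMapRingHom_comp_C π hφ)
  have hlead : π (z.coeff z.order) ≠ 0 := by
    rw [← leadingCoeff_eq]
    exact ((isUnit_iff.mp hX).map π).ne_zero
  refine (zero_lt_orderTop_iff hX.ne_zero).mpr (lt_of_not_ge fun hle => hlead ?_)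
  exact orderTop_pos_iff_forall_coeff_eq_zero.mp hpos z.order hle

lemma orderTop_map_X_pos [IsReduced A] (hf : Function.Surjective f)
    (hφ : ∀ r, φ (PowerSeries.C r) = C (f r)) (hX : IsUnit (φ PowerSeries.X)) :
    0 < (φ PowerSeries.X).orderTop := by
  refine orderTop_pos_iff_forall_coeff_eq_zero.mpr fun i hi =>
    (nilpotent_iff_mem_prime.mpr fun p _ => ?_).eq_zero
  let π := Ideal.Quotient.mk p
  have hpos : 0 < ((φ PowerSeries.X).map π).orderTop :=
    orderTop_map_X_pos_of_isDomain (φ := (hahnSeriesMapRingHom π).comp φ)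
      (Ideal.Quotient.mk_surjective.comp hf) (hahnSeriesMapRingHom_comp_C π hφ)
      (hX.map (hahnSeriesMapRingHom π))
  exact Ideal.Quotient.eq_zero_iff_mem.mp
    (orderTop_pos_iff_forall_coeff_eq_zero.mp hpos i hi)

end PositiveOrder

section Endomorphisms

variable {R : Type*} [CommRing R]

lemma laurentSeries_algebraMap_apply (r : R) : algebraMap R R⸨X⸩ r = HahnSeries.C r := by
  simp [RingHom.algebraMap_toAlgebra]

lemma isUnit_single_one : IsUnit (HahnSeries.single (1 : ℤ) (1 : R)) :=
  .of_mul_eq_one (HahnSeries.single (-1) 1) (by simp)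

lemma orderTop_algHom_single_one_pos [IsReduced R] (σ : R⸨X⸩ →ₐ[R] R⸨X⸩) :
    0 < (σ (HahnSeries.single (1 : ℤ) (1 : R))).orderTop := by
  let φ : R⟦X⟧ →+* R⸨X⸩ := (σ : R⸨X⸩ →+* R⸨X⸩).comp (HahnSeries.ofPowerSeries ℤ R)
  have hC (r : R) : φ (PowerSeries.C r) = HahnSeries.C (RingHom.id R r) := by
    simpa [φ, laurentSeries_algebraMap_apply] using σ.commutes r
  have hX : φ PowerSeries.X = σ (HahnSeries.single 1 1) := by simp [φ]
  rw [← hX]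
  exact orderTop_map_X_pos Function.surjective_id hC (hX ▸ isUnit_single_one.map σ)

lemma exists_algHom_single_one_eq {z : R⸨X⸩} (hz : IsUnit z) (hpos : 0 < z.orderTop) :
    ∃ σ : R⸨X⸩ →ₐ[R] R⸨X⸩, σ (HahnSeries.single (1 : ℤ) (1 : R)) = z := by
  let ev : R⟦X⟧ →+* R⸨X⸩ := (PowerSeries.heval z : R⟦X⟧ →+* R⸨X⸩)
  have ev_X : ev PowerSeries.X = z := PowerSeries.heval_X z hpos
  have ev_C (r : R) : ev (PowerSeries.C r) = HahnSeries.C r := by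
    rw [← mul_one (HahnSeries.C r), HahnSeries.C_mul_eq_smul]
    exact PowerSeries.heval_C z r
  have hunit (y : Submonoid.powers (PowerSeries.X : R⟦X⟧)) : IsUnit (ev y) := by
    obtain ⟨_, n, rfl⟩ := y
    simpa only [map_pow, ev_X] using hz.pow n
  let ψ : R⸨X⸩ →+* R⸨X⸩ := IsLocalization.lift hunit
  have hψ (f : R⟦X⟧) : ψ (HahnSeries.ofPowerSeries ℤ R f) = ev f :=
    IsLocalization.lift_eq hunit f
  have hψC (r : R) : ψ (algebraMap R R⸨X⸩ r) = algebraMap R R⸨X⸩ r := by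
    rw [laurentSeries_algebraMap_apply, ← HahnSeries.ofPowerSeries_C, hψ, ev_C,
      HahnSeries.ofPowerSeries_C]
  refine ⟨{ ψ with commutes' := hψC }, ?_⟩
  calc ψ (HahnSeries.single 1 1)
    _ = ψ (HahnSeries.ofPowerSeries ℤ R PowerSeries.X) := by rw [HahnSeries.ofPowerSeries_X]
    _ = z := by rw [hψ, ev_X]

end Endomorphisms

theorem stmt16_general (R : Type*) [CommRing R] [IsReduced R] [Nontrivial R]
    (z : LaurentSeries R) :
    (∃ σ : LaurentSeries R →ₐ[R] LaurentSeries R,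
        σ (HahnSeries.single (1 : ℤ) (1 : R)) = z) ↔
      (IsUnit z ∧ 0 < z.order) := by
  constructor
  · rintro ⟨σ, rfl⟩
    have hunit := isUnit_single_one.map σ
    exact ⟨hunit, (HahnSeries.zero_lt_orderTop_iff hunit.ne_zero).mp
      (orderTop_algHom_single_one_pos σ)⟩
  · rintro ⟨hz, hpos⟩
    exact exists_algHom_single_one_eq hz (HahnSeries.zero_lt_orderTop_of_order hpos)

/-- let `k` be a field, `K = k((t))` the field of formal Laurent series and
`t = single 1 1`.  For `z ∈ K` there is a `k`-algebra endomorphism `σ : K → K` with `σ(t) = z`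
iff `z ≠ 0` and `v_t(z) > 0`; i.e. `{σ(t) : σ ∈ End(K/k)} = 𝔪 \ {0}`. -/
theorem stmt16 (k : Type*) [Field k] (z : LaurentSeries k) :
    (∃ σ : LaurentSeries k →ₐ[k] LaurentSeries k,
        σ (HahnSeries.single (1 : ℤ) (1 : k)) = z) ↔
      (z ≠ 0 ∧ 0 < z.order) := by
  rw [stmt16_general, isUnit_iff_ne_zero]
end

section
/- Let k be a field, K = k((t)) the field of formal Laurent series over k, and t ∈ K the Laurent series with single coefficient 1 in degree 1. For z ∈ K, there exists a k-algebra automorphism σ of K with σ(t) = z if and only if z ≠ 0 and v_t(z) = 1. In other words, {σ(t) : σ ∈ Aut(K/k)} = 𝔪 \ 𝔪², the set of uniformizers of the t-adic valuation. -/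
/-!
A power series `g` without constant term can be written `y ^ n + y` for every `n ≥ 2`, because
`X ^ n + X` has a compositional inverse. In a Laurent series field this property forces
`0 ≤ g.order`: if `y` has a pole, then the order of `y ^ n + y` is a negative multiple of `n`, which
excludes `n > -g.order`. The property is purely algebraic, so every `k`-algebra homomorphism `φ`
between Laurent series fields, continuous or not, maps `k[[t]]` to series of nonnegative order.
Hence `φ` preserves order `0`, it multiplies orders by the order of `φ t`, and surjectivity forces
this factor to be `1`. Conversely, a series of order `1` is a power series with a compositional
inverse, so substituting it for `t` is an automorphism of `k[[t]]`, which extends to the fraction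
field.
-/

namespace LaurentSeriesAut

open HahnSeries

section Order

variable {Γ R : Type*}

lemma order_add_nonneg [LinearOrder Γ] [Zero Γ] [AddMonoid R] {x y : HahnSeries Γ R}
    (hx : 0 ≤ x.order) (hy : 0 ≤ y.order) : 0 ≤ (x + y).order := by
  rw [← zero_le_orderTop_iff] at hx hy ⊢
  exact (le_min hx hy).trans min_orderTop_le_orderTop_add

lemma order_add_eq_left [LinearOrder Γ] [Zero Γ] [AddMonoid R] {x y : HahnSeries Γ R}
    (hx : x ≠ 0) (hxy : x.order < y.order) : (x + y).order = x.order := by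
  obtain rfl | hy := eq_or_ne y 0
  · rw [add_zero]
  have h : (x + y).orderTop = x.orderTop := orderTop_add_eq_left <| by
    rwa [← order_eq_orderTop_of_ne_zero hx, ← order_eq_orderTop_of_ne_zero hy,
      WithTop.coe_lt_coe]
  have hadd : x + y ≠ 0 := orderTop_ne_top.mp (h ▸ orderTop_ne_top.mpr hx)
  rwa [← order_eq_orderTop_of_ne_zero hx, ← order_eq_orderTop_of_ne_zero hadd,
    WithTop.coe_inj] at h

variable [AddCommGroup Γ] [LinearOrder Γ] [IsOrderedAddMonoid Γ]

lemma order_inv [Field R] (x : HahnSeries Γ R) : x⁻¹.order = -x.order := by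
  obtain rfl | hx := eq_or_ne x 0
  · simp
  · rw [eq_neg_iff_add_eq_zero, ← order_mul (inv_ne_zero hx) hx, inv_mul_cancel₀ hx, order_one]

lemma order_zpow [Field R] (x : HahnSeries Γ R) : ∀ n : ℤ, (x ^ n).order = n • x.order
  | (n : ℕ) => by rw [zpow_natCast, order_pow, natCast_zsmul]
  | .negSucc n => by rw [zpow_negSucc, order_inv, order_pow, negSucc_zsmul]

lemma order_pow_add_self [Semiring R] [NoZeroDivisors R] {x : HahnSeries Γ R}
    (hx : x.order < 0) {n : ℕ} (hn : 2 ≤ n) : (x ^ n + x).order = n • x.order := by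
  have hx0 : x ≠ 0 := by
    rintro rfl
    exact hx.ne order_zero
  have hlt : (x ^ n).order < x.order := by
    obtain ⟨m, rfl⟩ := Nat.exists_eq_add_of_le' hn
    rw [order_pow, succ_nsmul]
    exact add_lt_of_neg_left _ (nsmul_neg hx m.succ_ne_zero)
  rw [order_add_eq_left (pow_ne_zero n hx0) hlt, order_pow]

end Order

open PowerSeries LaurentSeries

section PowAddSelf

variable {R : Type*} [CommRing R]

lemma exists_pow_add_self_eq_X {n : ℕ} (hn : 2 ≤ n) : ∃ Q : R⟦X⟧, Q ^ n + Q = X := by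
  set P : R⟦X⟧ := X ^ n + X with hP
  have h0 : P.constantCoeff = 0 := by
    rw [hP, map_add, map_pow, constantCoeff_X, zero_pow (by omega), add_zero]
  have h1 : P.coeff 1 = 1 := by
    rw [hP, map_add, coeff_X_pow, if_neg (by omega), coeff_one_X, zero_add]
  have hu : IsUnit (P.coeff 1) := h1 ▸ isUnit_one
  have hQ := HasSubst.substInvOfIsUnit P hu
  refine ⟨P.substInvOfIsUnit hu, ?_⟩
  calc P.substInvOfIsUnit hu ^ n + P.substInvOfIsUnit hu
    _ = (X ^ n + X : R⟦X⟧).subst (P.substInvOfIsUnit hu) := by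
        rw [subst_add hQ, subst_pow hQ, subst_X hQ]
    _ = X := subst_substInvOfIsUnit_right P h0 hu

lemma exists_pow_add_self_eq {g : R⟦X⟧} (hg : HasSubst g) {n : ℕ} (hn : 2 ≤ n) :
    ∃ y : R⟦X⟧, y ^ n + y = g := by
  obtain ⟨Q, hQ⟩ := exists_pow_add_self_eq_X (R := R) hn
  exact ⟨substAlgHom hg Q, by rw [← map_pow, ← map_add, hQ, substAlgHom_X]⟩

lemma order_nonneg_of_forall_exists_pow_add_self {S : Type*} [Semiring S] [NoZeroDivisors S]
    {g : S⸨X⸩} (hg : ∀ n : ℕ, 2 ≤ n → ∃ y : S⸨X⸩, y ^ n + y = g) : 0 ≤ g.order := by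
  by_contra! hneg
  obtain ⟨y, hy⟩ := hg (g.order.natAbs + 1) (by omega)
  have hy_neg : y.order < 0 := by
    by_contra! hy_nonneg
    have : 0 ≤ (y ^ (g.order.natAbs + 1) + y).order :=
      order_add_nonneg (HahnSeries.order_pow y _ ▸ nsmul_nonneg hy_nonneg _) hy_nonneg
    exact hneg.not_ge (hy ▸ this)
  have hdvd : ((g.order.natAbs + 1 : ℕ) : ℤ) ∣ g.order :=
    ⟨y.order, by rw [← nsmul_eq_mul, ← order_pow_add_self hy_neg (by omega), hy]⟩
  have := Int.le_of_dvd (by omega) (Int.dvd_neg.mpr hdvd)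
  omega

end PowAddSelf

section AlgHom

lemma exists_ofPowerSeries_eq {R : Type*} [Semiring R] {f : R⸨X⸩} (hf : 0 ≤ f.order) :
    ∃ F : R⟦X⟧, ofPowerSeries ℤ R F = f := by
  obtain ⟨n, hn⟩ := Int.eq_ofNat_of_zero_le hf
  exact ⟨_, X_order_mul_powerSeriesPart hn.symm⟩

lemma order_algHom_nonneg {R S : Type*} [CommRing R] [CommRing S] [NoZeroDivisors S] [Algebra R S]
    (φ : R⸨X⸩ →ₐ[R] S⸨X⸩) {f : R⸨X⸩} (hf : 0 ≤ f.order) : 0 ≤ (φ f).order := by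
  obtain ⟨F, rfl⟩ := exists_ofPowerSeries_eq hf
  obtain ⟨c, G, hG, rfl⟩ : ∃ (c : R) (G : R⟦X⟧), G.constantCoeff = 0 ∧ F = C c + G :=
    ⟨F.constantCoeff, F - C F.constantCoeff, by simp, by simp⟩
  rw [map_add, map_add]
  refine order_add_nonneg ?_ (order_nonneg_of_forall_exists_pow_add_self fun n hn ↦ ?_)
  · have hC : ofPowerSeries ℤ R (C c) = algebraMap R R⸨X⸩ c := rfl
    rw [hC, φ.commutes, HahnSeries.algebraMap_apply', PowerSeries.algebraMap_apply, ofPowerSeries_C,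
      order_C]
  · obtain ⟨y, hy⟩ := exists_pow_add_self_eq (HasSubst.of_constantCoeff_zero' hG) hn
    exact ⟨φ (ofPowerSeries ℤ R y), by rw [← hy, map_add, map_add, map_pow, map_pow]⟩

variable {k K : Type*} [Field k] [Field K] [Algebra k K] (φ : k⸨X⸩ →ₐ[k] K⸨X⸩)

lemma order_algHom_eq_zero {f : k⸨X⸩} (hf : f.order = 0) : (φ f).order = 0 := by
  have h := order_algHom_nonneg φ hf.ge
  have hinv := order_algHom_nonneg φ (f := f⁻¹) (by rw [order_inv, hf, neg_zero])
  rw [map_inv₀, order_inv] at hinv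
  omega

lemma order_algHom (f : k⸨X⸩) :
    (φ f).order = f.order * (φ (single (1 : ℤ) (1 : k))).order := by
  obtain rfl | hf := eq_or_ne f 0
  · simp
  set t : k⸨X⸩ := single (1 : ℤ) (1 : k)
  have ht : t ≠ 0 := single_ne_zero one_ne_zero
  have ht_order : t.order = 1 := order_single one_ne_zero
  set u : k⸨X⸩ := f * (t ^ f.order)⁻¹ with hu
  have htf : t ^ f.order ≠ 0 := zpow_ne_zero _ ht
  have hu0 : u ≠ 0 := mul_ne_zero hf (inv_ne_zero htf)
  have hu_order : u.order = 0 := by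
    rw [hu, order_mul hf (inv_ne_zero htf), order_inv, order_zpow, ht_order, smul_eq_mul, mul_one,
      add_neg_cancel]
  calc (φ f).order = (φ u * φ t ^ f.order).order := by
        rw [← map_zpow₀, ← map_mul, hu, inv_mul_cancel_right₀ htf]
    _ = (φ u).order + f.order * (φ t).order := by
        rw [order_mul ((map_ne_zero φ).mpr hu0) (zpow_ne_zero _ ((map_ne_zero φ).mpr ht)),
          order_zpow, smul_eq_mul]
    _ = f.order * (φ t).order := by rw [order_algHom_eq_zero φ hu_order, zero_add]

lemma order_algHom_single_of_surjective (hφ : Function.Surjective φ) :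
    (φ (single (1 : ℤ) (1 : k))).order = 1 := by
  obtain ⟨s, hs⟩ := hφ (single (1 : ℤ) (1 : K))
  have hnonneg : 0 ≤ (φ (single (1 : ℤ) (1 : k))).order :=
    order_algHom_nonneg φ (by rw [order_single one_ne_zero]; exact zero_le_one)
  refine Int.eq_one_of_mul_eq_one_left hnonneg (a := s.order) ?_
  rw [← order_algHom, hs, order_single one_ne_zero]

end AlgHom

section Subst

variable {R : Type*} [CommRing R]

lemma substAlgHom_comp_substAlgHom_eq_id {P Q : R⟦X⟧} (hP : HasSubst P) (hQ : HasSubst Q)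
    (h : P.subst Q = X) :
    (substAlgHom hQ : R⟦X⟧ →ₐ[R] R⟦X⟧).comp (substAlgHom hP) = AlgHom.id R R⟦X⟧ := by
  ext1 f
  calc substAlgHom hQ (substAlgHom hP f)
    _ = f.subst (P.subst Q) := by
        rw [coe_substAlgHom, coe_substAlgHom]
        exact subst_comp_subst_apply hP hQ f
    _ = f := by rw [h, X_subst]

/-- The automorphism `f ↦ f(P)` of `R⟦X⟧` given by substituting a power series `P` with zero
constant term and invertible linear coefficient; its inverse substitutes the compositional inverse
of `P`. -/
noncomputable def substAlgEquiv (P : R⟦X⟧) (h0 : P.constantCoeff = 0)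
    (h1 : IsUnit (P.coeff 1)) : R⟦X⟧ ≃ₐ[R] R⟦X⟧ :=
  have hP : HasSubst P := .of_constantCoeff_zero' h0
  have hQ : HasSubst (P.substInvOfIsUnit h1) := .substInvOfIsUnit P h1
  AlgEquiv.ofAlgHom (substAlgHom hP) (substAlgHom hQ)
    (substAlgHom_comp_substAlgHom_eq_id hQ hP (subst_substInvOfIsUnit_left P h0 h1))
    (substAlgHom_comp_substAlgHom_eq_id hP hQ (subst_substInvOfIsUnit_right P h0 h1))

lemma substAlgEquiv_X (P : R⟦X⟧) (h0 : P.constantCoeff = 0) (h1 : IsUnit (P.coeff 1)) :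
    substAlgEquiv P h0 h1 X = P :=
  substAlgHom_X (.of_constantCoeff_zero' h0)

lemma exists_ofPowerSeries_eq_of_order_eq_one {R : Type*} [Semiring R] {z : R⸨X⸩}
    (hz : z.order = 1) :
    ∃ P : R⟦X⟧, ofPowerSeries ℤ R P = z ∧ P.constantCoeff = 0 ∧ P.coeff 1 ≠ 0 := by
  obtain ⟨P, rfl⟩ := exists_ofPowerSeries_eq (hz ▸ zero_le_one)
  refine ⟨P, rfl, ?_, ?_⟩
  · rw [← coeff_zero_eq_constantCoeff_apply, ← coeff_coe_powerSeries]
    exact coeff_eq_zero_of_lt_order (by rw [hz]; exact zero_lt_one)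
  · rw [← coeff_coe_powerSeries, Nat.cast_one, ← hz, ne_eq, coeff_order_eq_zero]
    intro h
    rw [h, HahnSeries.order_zero] at hz
    exact zero_ne_one hz

lemma exists_algEquiv_single_eq {k : Type*} [Field k] {z : k⸨X⸩} (hz : z.order = 1) :
    ∃ σ : k⸨X⸩ ≃ₐ[k] k⸨X⸩, σ (single (1 : ℤ) (1 : k)) = z := by
  obtain ⟨P, rfl, h0, h1⟩ := exists_ofPowerSeries_eq_of_order_eq_one hz
  -- Writing out `IsScalarTower k k⟦X⟧ k⸨X⸩` would select the coefficientwise action of `k` on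
  -- `k⸨X⸩`, which is not definitionally the action of the `k`-algebra structure.
  have := IsScalarTower.of_algebraMap_eq (R := k) (S := k⟦X⟧) (A := k⸨X⸩) fun _ ↦ rfl
  refine ⟨IsFractionRing.algEquivOfAlgEquiv (substAlgEquiv P h0 h1.isUnit), ?_⟩
  rw [← ofPowerSeries_X, ← LaurentSeries.coe_algebraMap,
    IsFractionRing.algEquivOfAlgEquiv_algebraMap, substAlgEquiv_X]

end Subst

end LaurentSeriesAut

/-- let `k` be a field, `K = k((t))` the field of formal Laurent series and
`t = single 1 1`.  For `z ∈ K` there is a `k`-algebra automorphism `σ` of `K` with `σ(t) = z`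
iff `z ≠ 0` and `v_t(z) = 1`; i.e. `{σ(t) : σ ∈ Aut(K/k)} = 𝔪 \ 𝔪²`, the set of uniformizers. -/
theorem stmt17 (k : Type*) [Field k] (z : LaurentSeries k) :
    (∃ σ : LaurentSeries k ≃ₐ[k] LaurentSeries k,
        σ (HahnSeries.single (1 : ℤ) (1 : k)) = z) ↔
      (z ≠ 0 ∧ z.order = 1) := by
  constructor
  · rintro ⟨σ, rfl⟩
    exact ⟨(map_ne_zero σ).mpr (HahnSeries.single_ne_zero one_ne_zero),
      LaurentSeriesAut.order_algHom_single_of_surjective σ.toAlgHom σ.surjective⟩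
  · rintro ⟨-, hz⟩
    exact LaurentSeriesAut.exists_algEquiv_single_eq hz
end

section
/- Let k be a field and K = k((t)) the field of formal Laurent series over k. Every k-algebra homomorphism σ : K → K preserves the t-adic valuation ring: for every nonzero x ∈ K, v_t(x) ≥ 0 if and only if v_t(σ(x)) ≥ 0 (note σ(x) ≠ 0 since σ is injective). Moreover, if σ is a k-algebra automorphism of K, then v_t(σ(x)) = v_t(x) for every nonzero x ∈ K. -/
/-!
A principal unit `f ∈ 1 + t k⟦t⟧` has `n`-th roots for arbitrarily large `n`, by Hensel's lemma.
A multiplicative map into a Laurent series field carries these roots along, so the order of the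
image of `f` is divisible by arbitrarily large `n` and hence vanishes. Nonzero constants also go to
elements of order `0`, so all units of `k⟦t⟧` do, and therefore `v (σ x) = v x * v (σ t)`.
The factor `v (σ t)` is nonnegative because `1 + t` is a unit. It is not `0`, since otherwise the
leading coefficient `c ≠ 0` of `σ t` would be a root of some polynomial `p` over `k` with `p 0 ≠ 0`,
and the unit `p(t)` would have an image of positive order. If `σ` is surjective, the factor
divides `1`.
-/

section NthRoots

theorem exists_pow_eq_of_sub_one_mem {R : Type*} [CommRing R] {I : Ideal R} [HenselianRing R I]
    {n : ℕ} (hn : n ≠ 0) (hunit : IsUnit (n : R ⧸ I)) {f : R} (hf : f - 1 ∈ I) :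
    ∃ g : R, g ^ n = f := by
  have approx_root : (Polynomial.X ^ n - Polynomial.C f).eval 1 ∈ I := by
    simpa using I.neg_mem hf
  have simple_root : IsUnit (Ideal.Quotient.mk I
      ((Polynomial.X ^ n - Polynomial.C f).derivative.eval 1)) := by
    simpa [Polynomial.derivative_X_pow] using hunit
  obtain ⟨g, hg, -⟩ := HenselianRing.is_henselian _
    (Polynomial.monic_X_pow_sub_C f hn) 1 approx_root simple_root
  exact ⟨g, by simpa [sub_eq_zero] using hg⟩

theorem exists_pow_eq_of_constantCoeff_eq_one {R : Type*} [CommRing R] {n : ℕ} (hn : n ≠ 0)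
    (hunit : IsUnit (n : R)) {f : PowerSeries R} (hf : PowerSeries.constantCoeff f = 1) :
    ∃ g : PowerSeries R, g ^ n = f := by
  have hquot : IsUnit (n : PowerSeries R ⧸ Ideal.span {(PowerSeries.X : PowerSeries R)}) := by
    simpa using hunit.map ((Ideal.Quotient.mk _).comp PowerSeries.C)
  refine exists_pow_eq_of_sub_one_mem hn hquot ?_
  rw [Ideal.mem_span_singleton, PowerSeries.X_dvd_iff, map_sub, hf, map_one, sub_self]

theorem exists_gt_natCast_ne_zero (R : Type*) [NonAssocSemiring R] [Nontrivial R] (N : ℕ) :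
    ∃ n > N, (n : R) ≠ 0 := by
  by_cases h : ((N + 1 : ℕ) : R) = 0
  · exact ⟨N + 1 + 1, by omega, by rw [Nat.cast_succ, h, zero_add]; exact one_ne_zero⟩
  · exact ⟨N + 1, N.lt_succ_self, h⟩

end NthRoots

section Order

open scoped PowerSeries LaurentSeries

/-- The inclusion `l⟦X⟧ → l⸨X⸩` as a homomorphism of `k`-algebras. Unlike
`HahnSeries.ofPowerSeriesAlg`, it uses on `l⸨X⸩` the algebra structure that factors through `l⟦X⟧`,
which is the one instance resolution finds for Laurent series. -/
noncomputable def ofPowerSeriesAlgHom (k l : Type*) [CommSemiring k] [CommSemiring l]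
    [Algebra k l] : l⟦X⟧ →ₐ[k] l⸨X⸩ :=
  { HahnSeries.ofPowerSeries ℤ l with commutes' := fun _ ↦ rfl }

theorem constantCoeff_aeval {R A : Type*} [CommSemiring R] [CommSemiring A] [Algebra R A]
    (F : A⟦X⟧) (p : Polynomial R) :
    PowerSeries.constantCoeff (Polynomial.aeval F p) =
      Polynomial.aeval (PowerSeries.constantCoeff F) p := by
  rw [Polynomial.aeval_def, Polynomial.aeval_def, Polynomial.hom_eval₂]
  congr 1

theorem exists_coe_eq_of_order_nonneg {R : Type*} [Semiring R] {x : R⸨X⸩} (hx : 0 ≤ x.order) :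
    ∃ F : R⟦X⟧, (F : R⸨X⸩) = x :=
  ⟨_, LaurentSeries.X_order_mul_powerSeriesPart (Int.toNat_of_nonneg hx)⟩

theorem order_coe_pos {R : Type*} [Semiring R] {f : R⟦X⟧} (hf0 : f ≠ 0)
    (hf : PowerSeries.constantCoeff f = 0) : 0 < (f : R⸨X⸩).order := by
  have hcoe : (f : R⸨X⸩) ≠ 0 := by
    rwa [Ne, map_eq_zero_iff _ HahnSeries.ofPowerSeries_injective]
  rw [← Int.add_one_le_iff, HahnSeries.le_order_iff_forall hcoe]
  intro i hi
  rw [PowerSeries.coeff_coe]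
  split_ifs with hneg
  · rfl
  · rwa [show i = 0 by omega, Int.natAbs_zero, PowerSeries.coeff_zero_eq_constantCoeff_apply]

variable {k l : Type*} [Field k] [Field l]

theorem order_map_eq_zero_of_constantCoeff_eq_one (φ : k⟦X⟧ →* l⸨X⸩) {f : k⟦X⟧}
    (hf : PowerSeries.constantCoeff f = 1) : (φ f).order = 0 := by
  obtain ⟨n, hlt, hnk⟩ := exists_gt_natCast_ne_zero k (φ f).order.natAbs
  obtain ⟨g, hg⟩ := exists_pow_eq_of_constantCoeff_eq_one (by omega) hnk.isUnit hf
  have hdvd : (n : ℤ) ∣ (φ f).order := by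
    rw [← hg, map_pow, HahnSeries.order_pow, nsmul_eq_mul]
    exact dvd_mul_right _ _
  exact Int.eq_zero_of_abs_lt_dvd hdvd (by rw [Int.abs_eq_natAbs]; exact_mod_cast hlt)

theorem order_map_single (σ : k⸨X⸩ →+* l⸨X⸩) (n : ℤ) :
    (σ (HahnSeries.single n 1)).order = n * (σ (HahnSeries.single 1 1)).order := by
  have hne (m : ℤ) : σ (HahnSeries.single m 1) ≠ 0 := by simp
  let orderHom : ℤ →+ ℤ := .mk' (fun m ↦ (σ (HahnSeries.single m 1)).order) fun a b ↦ by
    rw [← HahnSeries.order_mul (hne a) (hne b), ← map_mul, HahnSeries.single_mul_single, one_mul]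
  calc orderHom n = orderHom (n • 1) := by rw [zsmul_one, Int.cast_id]
    _ = n * orderHom 1 := map_zsmul orderHom n 1

theorem order_map_X_nonneg (φ : k⟦X⟧ →+* l⸨X⸩) : 0 ≤ (φ PowerSeries.X).order := by
  by_cases hX : φ PowerSeries.X = 0
  · rw [hX, HahnSeries.order_zero]
  have hunit : (φ (1 + PowerSeries.X)).order = 0 :=
    order_map_eq_zero_of_constantCoeff_eq_one (φ : k⟦X⟧ →* l⸨X⸩) (by simp)
  have hsum : φ (1 + PowerSeries.X) + -1 = φ PowerSeries.X := by simp
  calc 0 = min (φ (1 + PowerSeries.X)).order (-1 : l⸨X⸩).order := by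
        rw [hunit, HahnSeries.order_neg, HahnSeries.order_one, min_self]
    _ ≤ (φ (1 + PowerSeries.X) + -1).order :=
        HahnSeries.min_order_le_order_add (by rwa [hsum])
    _ = (φ PowerSeries.X).order := by rw [hsum]

variable [Algebra k l]

theorem order_map_eq_zero_of_isUnit (φ : k⟦X⟧ →ₐ[k] l⸨X⸩) {f : k⟦X⟧} (hf : IsUnit f) :
    (φ f).order = 0 := by
  set c := PowerSeries.constantCoeff f with hcf
  have hc : c ≠ 0 := (hf.map PowerSeries.constantCoeff).ne_zero
  have hconst : φ (PowerSeries.C c⁻¹) = HahnSeries.C (algebraMap k l c⁻¹) := by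
    rw [← HahnSeries.ofPowerSeries_C, ← PowerSeries.algebraMap_apply]
    exact φ.commutes c⁻¹
  have hconst_ne : φ (PowerSeries.C c⁻¹) ≠ 0 := by simpa [hconst] using hc
  have hprincipal : (φ (PowerSeries.C c⁻¹ * f)).order = 0 :=
    order_map_eq_zero_of_constantCoeff_eq_one (φ : k⟦X⟧ →* l⸨X⸩) (by simp [← hcf, hc])
  rwa [map_mul, HahnSeries.order_mul hconst_ne (hf.map φ).ne_zero, hconst, HahnSeries.order_C,
    zero_add] at hprincipal

theorem order_map_X_pos [Algebra.IsAlgebraic k l] (φ : k⟦X⟧ →ₐ[k] l⸨X⸩)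
    (hX : φ PowerSeries.X ≠ 0) : 0 < (φ PowerSeries.X).order := by
  obtain ⟨F, hF⟩ : ∃ F, ofPowerSeriesAlgHom k l F = φ PowerSeries.X :=
    exists_coe_eq_of_order_nonneg (order_map_X_nonneg (φ : k⟦X⟧ →+* l⸨X⸩))
  set c := PowerSeries.constantCoeff F
  rcases eq_or_ne c 0 with hc | hc
  · have hF0 : F ≠ 0 := by
      rintro rfl
      exact hX (hF.symm.trans (map_zero _))
    exact (order_coe_pos hF0 hc).trans_eq (congrArg HahnSeries.order hF)
  set p := minpoly k c
  have hunit : IsUnit (Polynomial.aeval (PowerSeries.X : k⟦X⟧) p) := by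
    rw [PowerSeries.isUnit_iff_constantCoeff, isUnit_iff_ne_zero, constantCoeff_aeval,
      PowerSeries.constantCoeff_X, ← Polynomial.coeff_zero_eq_aeval_zero]
    exact minpoly.coeff_zero_ne_zero (Algebra.IsAlgebraic.isAlgebraic c).isIntegral hc
  have hroot : PowerSeries.constantCoeff (Polynomial.aeval F p) = 0 := by
    rw [constantCoeff_aeval, minpoly.aeval]
  have hmap : ofPowerSeriesAlgHom k l (Polynomial.aeval F p) =
      φ (Polynomial.aeval PowerSeries.X p) := by
    rw [← Polynomial.aeval_algHom_apply, ← Polynomial.aeval_algHom_apply, hF]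
  have hne : Polynomial.aeval F p ≠ 0 := fun h ↦
    (hunit.map φ).ne_zero (by rw [← hmap, h, map_zero])
  have hpos : 0 < (ofPowerSeriesAlgHom k l (Polynomial.aeval F p)).order :=
    order_coe_pos hne hroot
  rw [hmap, order_map_eq_zero_of_isUnit φ hunit] at hpos
  exact absurd hpos (lt_irrefl 0)

theorem order_map_eq_mul (σ : k⸨X⸩ →ₐ[k] l⸨X⸩) {x : k⸨X⸩} (hx : x ≠ 0) :
    (σ x).order = x.order * (σ (HahnSeries.single 1 1)).order := by
  have hunit : IsUnit x.powerSeriesPart := by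
    simpa [PowerSeries.isUnit_iff_constantCoeff, ← PowerSeries.coeff_zero_eq_constantCoeff_apply]
      using hx
  have hpart : (σ x.powerSeriesPart).order = 0 :=
    order_map_eq_zero_of_isUnit (σ.comp (ofPowerSeriesAlgHom k k)) hunit
  have hfactor : σ x = σ (HahnSeries.single x.order 1) * σ x.powerSeriesPart := by
    rw [← map_mul, x.single_order_mul_powerSeriesPart]
  have hne : σ (HahnSeries.single x.order 1) * σ x.powerSeriesPart ≠ 0 :=
    hfactor ▸ (map_ne_zero σ).mpr hx
  rw [hfactor, HahnSeries.order_mul (left_ne_zero_of_mul hne) (right_ne_zero_of_mul hne), hpart,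
    add_zero]
  exact order_map_single (σ : k⸨X⸩ →+* l⸨X⸩) x.order

theorem order_map_single_pos [Algebra.IsAlgebraic k l] (σ : k⸨X⸩ →ₐ[k] l⸨X⸩) :
    0 < (σ (HahnSeries.single 1 1)).order := by
  have hX : σ.comp (ofPowerSeriesAlgHom k k) PowerSeries.X = σ (HahnSeries.single 1 1) :=
    congrArg σ HahnSeries.ofPowerSeries_X
  rw [← hX]
  exact order_map_X_pos _ (by simp [hX])

theorem order_map_single_eq_one_of_surjective [Algebra.IsAlgebraic k l] {σ : k⸨X⸩ →ₐ[k] l⸨X⸩}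
    (hσ : Function.Surjective σ) : (σ (HahnSeries.single 1 1)).order = 1 := by
  obtain ⟨x, hx⟩ := hσ (HahnSeries.single 1 1)
  have hx0 : x ≠ 0 := (map_ne_zero σ).mp (hx ▸ HahnSeries.single_ne_zero one_ne_zero)
  refine Int.eq_one_of_dvd_one (order_map_single_pos σ).le ⟨x.order, ?_⟩
  rw [mul_comm, ← order_map_eq_mul σ hx0, hx, HahnSeries.order_single one_ne_zero]

theorem stmt18_general [Algebra.IsAlgebraic k l] (σ : k⸨X⸩ →ₐ[k] l⸨X⸩) {x : k⸨X⸩} (hx : x ≠ 0) :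
    (0 ≤ x.order ↔ 0 ≤ (σ x).order) ∧ (Function.Surjective σ → (σ x).order = x.order) := by
  rw [order_map_eq_mul σ hx]
  refine ⟨(mul_nonneg_iff_of_pos_right (order_map_single_pos σ)).symm, fun hσ ↦ ?_⟩
  rw [order_map_single_eq_one_of_surjective hσ, mul_one]

end Order

/-- every `k`-algebra endomorphism `σ` of `K = k((t))` preserves the `t`-adic
valuation ring (for nonzero `x`, `v_t(x) ≥ 0` iff `v_t(σ x) ≥ 0`), and every `k`-algebra
automorphism preserves the valuation (`v_t(σ x) = v_t(x)` for nonzero `x`). -/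
theorem stmt18 (k : Type*) [Field k] :
    (∀ σ : LaurentSeries k →ₐ[k] LaurentSeries k, ∀ x : LaurentSeries k, x ≠ 0 →
      (0 ≤ x.order ↔ 0 ≤ (σ x).order)) ∧
    (∀ σ : LaurentSeries k ≃ₐ[k] LaurentSeries k, ∀ x : LaurentSeries k, x ≠ 0 →
      (σ x).order = x.order) :=
  ⟨fun σ _ hx ↦ (stmt18_general σ hx).1,
    fun σ _ hx ↦ (stmt18_general (σ : LaurentSeries k →ₐ[k] LaurentSeries k) hx).2 σ.surjective⟩
end
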